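/- Let I be an inversive plane of even order q, let C be a circle of I, and let x be a point of I with x ∉ C. Then there is a unique point y ≠ x such that every circle of I containing both x and y meets C in exactly one point. -/

import Mathlib

/-- An inversive plane of order `q` on a finite point set `P`:
`|P| = q² + 1`, every circle has `q + 1` points, and any three distinct
points lie in exactly one circle. -/
structure InversivePlane (q : ℕ) (P : Type) [Fintype P] where
  two_le : 2 ≤ q
  circles : Finset (Finset P)
  card_points : Fintype.card P = q ^ 2 + 1
  circle_card : ∀ C ∈ circles, C.card = q + 1
  three_points : ∀ x y z : P, x ≠ y → x ≠ z → y ≠ z →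
      ∃! C, C ∈ circles ∧ x ∈ C ∧ y ∈ C ∧ z ∈ C

/-!
The circles through `x`, with `x` removed, are the lines of an affine plane of order `q`, in which
a circle `C` avoiding `x` is an oval: `q + 1` points, at most two on any line. The claim becomes the
classical fact that an oval in a plane of even order has a unique nucleus.

The oval has one tangent at each of its points, hence `q + 1` tangents, and as `q + 1` is odd every
point lies on an odd number of them. The tangents carry `(q + 1) q > q²` incidences in total, so
some point `n` lies on at least three. A non-tangent line through `n` would meet the tangents in at
least `3 + (q - 1)` incidences, but each of the `q + 1` tangents meets it at most once; so every
line through `n` is tangent. A nucleus is unique because the `q + 1` lines through it are then all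
of the tangents.
-/

/-- An affine plane of order `q`, presented as a `2-(q², q, 1)` design. It serves as the derived
plane of an inversive plane at a point. -/
structure AffinePlane (q : ℕ) (A : Type*) [Fintype A] where
  two_le : 2 ≤ q
  lines : Finset (Finset A)
  card_points : Fintype.card A = q ^ 2
  line_card : ∀ ℓ ∈ lines, ℓ.card = q
  two_points : ∀ a b : A, a ≠ b → ∃! ℓ, ℓ ∈ lines ∧ a ∈ ℓ ∧ b ∈ ℓ

namespace AffinePlane

open Finset

variable {q : ℕ} {A : Type*} [Fintype A] [DecidableEq A] (π : AffinePlane q A) {C : Finset A}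
  {a b n : A}

/-- The pencil of lines through a point, over which incidences are counted. -/
def linesThrough (a : A) : Finset (Finset A) := {ℓ ∈ π.lines | a ∈ ℓ}

/-- The tangents of `C`: the lines meeting the point set `C` in exactly one point. -/
def tangents (C : Finset A) : Finset (Finset A) := {ℓ ∈ π.lines | #(ℓ ∩ C) = 1}

/-- An oval: `q + 1` points, at most two of them on any line. In terms of the projective closure,
these are the ovals that avoid the line at infinity. -/
structure IsOval (C : Finset A) : Prop where
  card_eq : #C = q + 1
  card_inter_le_two : ∀ ℓ ∈ π.lines, #(ℓ ∩ C) ≤ 2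

/-- A nucleus of `C`: a point such that every line through it is tangent to `C`. -/
def IsNucleus (C : Finset A) (n : A) : Prop := ∀ ℓ ∈ π.lines, n ∈ ℓ → #(ℓ ∩ C) = 1

variable {π} in
theorem mem_linesThrough {ℓ : Finset A} : ℓ ∈ π.linesThrough a ↔ ℓ ∈ π.lines ∧ a ∈ ℓ :=
  mem_filter

variable {π} in
theorem mem_tangents {ℓ : Finset A} : ℓ ∈ π.tangents C ↔ ℓ ∈ π.lines ∧ #(ℓ ∩ C) = 1 :=
  mem_filter

theorem card_inter_le_one {ℓ m : Finset A} (hℓ : ℓ ∈ π.lines) (hm : m ∈ π.lines) (hne : ℓ ≠ m) :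
    #(ℓ ∩ m) ≤ 1 := by
  refine card_le_one.2 fun a ha b hb => ?_
  rw [mem_inter] at ha hb
  by_contra hab
  exact hne ((π.two_points a b hab).unique ⟨hℓ, ha.1, hb.1⟩ ⟨hm, ha.2, hb.2⟩)

theorem card_filter_mem_linesThrough (hab : a ≠ b) : #{ℓ ∈ π.linesThrough a | b ∈ ℓ} = 1 := by
  rw [linesThrough, filter_filter, card_eq_one_iff_existsUnique]
  simpa only [mem_filter] using π.two_points a b hab

theorem sum_card_inter_linesThrough {S : Finset A} (ha : a ∉ S) :
    ∑ ℓ ∈ π.linesThrough a, #(S ∩ ℓ) = #S := by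
  simpa only [mul_one] using sum_card_inter fun b hb =>
    π.card_filter_mem_linesThrough (ne_of_mem_of_not_mem hb ha).symm

theorem card_linesThrough (a : A) : #(π.linesThrough a) = q + 1 := by
  have hline : ∀ ℓ ∈ π.linesThrough a, #(univ.erase a ∩ ℓ) = q - 1 := fun ℓ hℓ => by
    obtain ⟨hℓ, haℓ⟩ := mem_linesThrough.1 hℓ
    rw [erase_inter, univ_inter, card_erase_of_mem haℓ, π.line_card ℓ hℓ]
  have hcount := π.sum_card_inter_linesThrough (notMem_erase a univ)
  rw [sum_const_nat hline, card_erase_of_mem (mem_univ a), card_univ, π.card_points,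
    show q ^ 2 - 1 = (q + 1) * (q - 1) from Nat.sq_sub_sq q 1] at hcount
  exact Nat.eq_of_mul_eq_mul_right (Nat.sub_pos_of_lt π.two_le) hcount

variable {π}

namespace IsOval

theorem card_filter_mem_tangents_of_mem (hC : π.IsOval C) (ha : a ∈ C) :
    #{ℓ ∈ π.tangents C | a ∈ ℓ} = 1 := by
  have htangent : {ℓ ∈ π.tangents C | a ∈ ℓ} = {ℓ ∈ π.linesThrough a | #(ℓ ∩ C) = 1} :=
    filter_comm ..
  have hline : ∀ ℓ ∈ π.linesThrough a,
      #(C.erase a ∩ ℓ) + (if #(ℓ ∩ C) = 1 then 1 else 0) = 1 := fun ℓ hℓ => by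
    obtain ⟨hℓ, haℓ⟩ := mem_linesThrough.1 hℓ
    have hmem : a ∈ ℓ ∩ C := mem_inter.2 ⟨haℓ, ha⟩
    have hpos : 0 < #(ℓ ∩ C) := card_pos.2 ⟨a, hmem⟩
    have hle := hC.card_inter_le_two ℓ hℓ
    rw [erase_inter, inter_comm, card_erase_of_mem hmem]
    split_ifs <;> lia
  have hcount : q + #{ℓ ∈ π.linesThrough a | #(ℓ ∩ C) = 1} = q + 1 := by
    have hsum := sum_congr rfl hline
    rwa [sum_add_distrib, π.sum_card_inter_linesThrough (notMem_erase a C),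
      card_erase_of_mem ha, hC.card_eq, ← card_filter, ← card_eq_sum_ones,
      π.card_linesThrough] at hsum
  rw [htangent]
  exact Nat.add_left_cancel hcount

theorem odd_card_filter_mem_tangents (hC : π.IsOval C) (hq : Even q) (a : A) :
    Odd #{ℓ ∈ π.tangents C | a ∈ ℓ} := by
  by_cases ha : a ∈ C
  · rw [hC.card_filter_mem_tangents_of_mem ha]
    exact odd_one
  have htangent : {ℓ ∈ π.tangents C | a ∈ ℓ} = {ℓ ∈ π.linesThrough a | Odd #(C ∩ ℓ)} := by
    rw [tangents, filter_comm]
    refine filter_congr fun ℓ hℓ => ?_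
    have hle := hC.card_inter_le_two ℓ (mem_linesThrough.1 hℓ).1
    rw [inter_comm C]
    interval_cases #(ℓ ∩ C) <;> decide
  rw [htangent, ← odd_sum_iff_odd_card_odd, π.sum_card_inter_linesThrough ha, hC.card_eq]
  exact hq.add_one

theorem card_tangents (hC : π.IsOval C) : #(π.tangents C) = q + 1 := by
  have hcount := sum_card_inter fun _ => hC.card_filter_mem_tangents_of_mem
  rwa [sum_const_nat fun ℓ hℓ => by rw [inter_comm, (mem_tangents.1 hℓ).2], mul_one, mul_one,
    hC.card_eq] at hcount

theorem exists_three_le_card_filter_mem_tangents (hC : π.IsOval C) (hq : Even q) :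
    ∃ a, 3 ≤ #{ℓ ∈ π.tangents C | a ∈ ℓ} := by
  by_contra! hlt
  have hone : ∀ a, #{ℓ ∈ π.tangents C | a ∈ ℓ} = 1 := fun a => by
    obtain ⟨k, hk⟩ := hC.odd_card_filter_mem_tangents hq a
    have := hlt a
    lia
  have hcount := sum_card hone
  rw [sum_const_nat fun ℓ hℓ => π.line_card ℓ (mem_tangents.1 hℓ).1, hC.card_tangents,
    π.card_points] at hcount
  have := π.two_le
  lia

theorem isNucleus_of_three_le (hC : π.IsOval C) (hq : Even q)
    (hn : 3 ≤ #{ℓ ∈ π.tangents C | n ∈ ℓ}) : π.IsNucleus C n := by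
  intro ℓ hℓ hnℓ
  by_contra hnot
  have hupper : ∑ a ∈ ℓ, #{t ∈ π.tangents C | a ∈ t} ≤ q + 1 := calc
    _ = ∑ t ∈ π.tangents C, #(ℓ ∩ t) := by
      simp only [← filter_mem_eq_inter]
      exact sum_card_bipartiteAbove_eq_sum_card_bipartiteBelow fun a t => a ∈ t
    _ ≤ #(π.tangents C) * 1 := sum_le_card_nsmul _ _ _ fun t ht => by
      obtain ⟨ht, htC⟩ := mem_tangents.1 ht
      exact π.card_inter_le_one hℓ ht fun h => hnot (h ▸ htC)
    _ = q + 1 := by rw [mul_one, hC.card_tangents]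
  have hlower : q - 1 ≤ ∑ a ∈ ℓ.erase n, #{t ∈ π.tangents C | a ∈ t} := calc
    q - 1 = ∑ _a ∈ ℓ.erase n, 1 := by
      rw [← card_eq_sum_ones, card_erase_of_mem hnℓ, π.line_card ℓ hℓ]
    _ ≤ _ := sum_le_sum fun a _ => (hC.odd_card_filter_mem_tangents hq a).pos
  have := add_sum_erase ℓ (fun a => #{t ∈ π.tangents C | a ∈ t}) hnℓ
  have := π.two_le
  lia

theorem linesThrough_eq_tangents (hC : π.IsOval C) (hn : π.IsNucleus C n) :
    π.linesThrough n = π.tangents C := by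
  refine eq_of_subset_of_card_le (fun ℓ hℓ => ?_) ?_
  · obtain ⟨hℓ, hnℓ⟩ := mem_linesThrough.1 hℓ
    exact mem_tangents.2 ⟨hℓ, hn ℓ hℓ hnℓ⟩
  · rw [hC.card_tangents, π.card_linesThrough]

theorem isNucleus_unique (hC : π.IsOval C) (ha : π.IsNucleus C a) (hb : π.IsNucleus C b) :
    a = b := by
  by_contra hab
  have hpencil : π.linesThrough a = π.linesThrough b :=
    (hC.linesThrough_eq_tangents ha).trans (hC.linesThrough_eq_tangents hb).symm
  have hcard := π.card_filter_mem_linesThrough hab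
  rw [hpencil, filter_true_of_mem fun ℓ hℓ => (mem_linesThrough.1 hℓ).2,
    π.card_linesThrough] at hcard
  have := π.two_le
  lia

theorem existsUnique_isNucleus (hC : π.IsOval C) (hq : Even q) : ∃! n, π.IsNucleus C n := by
  obtain ⟨n, hn⟩ := hC.exists_three_le_card_filter_mem_tangents hq
  have hn := hC.isNucleus_of_three_le hq hn
  exact ⟨n, hn, fun _ hm => hC.isNucleus_unique hm hn⟩

end IsOval

end AffinePlane

section

open Finset

theorem card_subtype_inter_subtype {α : Type*} [DecidableEq α] {p : α → Prop} [DecidablePred p]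
    {s t : Finset α} (ht : ∀ a ∈ t, p a) : #(s.subtype p ∩ t.subtype p) = #(s ∩ t) := by
  have hinter : s.subtype p ∩ t.subtype p = (s ∩ t).subtype p := by
    ext a
    simp only [mem_inter, mem_subtype]
  rw [hinter, card_subtype, filter_true_of_mem fun a ha => ht a (mem_of_mem_inter_right ha)]

end

namespace InversivePlane

open Finset

variable {q : ℕ} {P : Type} [Fintype P] [DecidableEq P] (I : InversivePlane q P)
  {C D : Finset P} {x : P}

theorem card_inter_le_two (hC : C ∈ I.circles) (hD : D ∈ I.circles) (hne : C ≠ D) :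
    #(C ∩ D) ≤ 2 := by
  by_contra! hlt
  obtain ⟨a, b, c, ha, hb, hc, hab, hac, hbc⟩ := two_lt_card_iff.1 hlt
  rw [mem_inter] at ha hb hc
  exact hne ((I.three_points a b c hab hac hbc).unique
    ⟨hC, ha.1, hb.1, hc.1⟩ ⟨hD, ha.2, hb.2, hc.2⟩)

/-- The derived affine plane at `x`: its points are those other than `x`, its lines the circles
through `x` with `x` removed. -/
def derived (x : P) : AffinePlane q {p // p ≠ x} where
  two_le := I.two_le
  lines := {D ∈ I.circles | x ∈ D}.image (Finset.subtype (· ≠ x))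
  card_points := by simp [I.card_points]
  line_card := by
    simp only [forall_mem_image, mem_filter, and_imp]
    intro D hD hxD
    rw [card_subtype, filter_ne', card_erase_of_mem hxD, I.circle_card D hD, Nat.add_sub_cancel]
  two_points := by
    rintro ⟨a, hax⟩ ⟨b, hbx⟩ hab
    obtain ⟨D, ⟨hD, hxD, haD, hbD⟩, huniq⟩ :=
      I.three_points x a b hax.symm hbx.symm (Subtype.coe_ne_coe.2 hab)
    refine ⟨D.subtype (· ≠ x), ⟨mem_image_of_mem _ (mem_filter.2 ⟨hD, hxD⟩),
      mem_subtype.2 haD, mem_subtype.2 hbD⟩, ?_⟩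
    rintro _ ⟨hℓ, haℓ, hbℓ⟩
    obtain ⟨E, hE, rfl⟩ := mem_image.1 hℓ
    obtain ⟨hE, hxE⟩ := mem_filter.1 hE
    rw [huniq E ⟨hE, hxE, mem_subtype.1 haℓ, mem_subtype.1 hbℓ⟩]

theorem forall_mem_derived_lines {p : Finset {p // p ≠ x} → Prop} :
    (∀ ℓ ∈ (I.derived x).lines, p ℓ) ↔
      ∀ D ∈ I.circles, x ∈ D → p (D.subtype (· ≠ x)) := by
  simp only [derived, forall_mem_image, mem_filter, and_imp]

theorem isOval_derived (hx : x ∉ C) (hC : #C = q + 1)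
    (htwo : ∀ D ∈ I.circles, x ∈ D → #(D ∩ C) ≤ 2) :
    (I.derived x).IsOval (C.subtype (· ≠ x)) where
  card_eq := by rw [card_subtype, filter_ne', erase_eq_of_notMem hx, hC]
  card_inter_le_two := I.forall_mem_derived_lines.2 fun D hD hxD => by
    rw [card_subtype_inter_subtype fun _ ha => ne_of_mem_of_not_mem ha hx]
    exact htwo D hD hxD

theorem isNucleus_derived_iff (hx : x ∉ C) {y : {p // p ≠ x}} :
    (I.derived x).IsNucleus (C.subtype (· ≠ x)) y ↔
      ∀ D ∈ I.circles, x ∈ D → ↑y ∈ D → #(D ∩ C) = 1 := by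
  simp only [AffinePlane.IsNucleus, forall_mem_derived_lines, mem_subtype,
    card_subtype_inter_subtype fun _ ha => ne_of_mem_of_not_mem ha hx]

end InversivePlane

theorem exists_unique_nucleus_partner_general
    {q : ℕ} {P : Type} [Fintype P] [DecidableEq P] (hq : Even q) (I : InversivePlane q P)
    {C : Finset P} {x : P} (hx : x ∉ C) (hC : C.card = q + 1)
    (htwo : ∀ D ∈ I.circles, x ∈ D → (D ∩ C).card ≤ 2) :
    ∃! y, y ≠ x ∧ ∀ D ∈ I.circles, x ∈ D → y ∈ D → (D ∩ C).card = 1 := by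
  obtain ⟨⟨y, hyx⟩, hy, huniq⟩ := (I.isOval_derived hx hC htwo).existsUnique_isNucleus hq
  refine ⟨y, ⟨hyx, (I.isNucleus_derived_iff hx).1 hy⟩, fun z ⟨hzx, hz⟩ => ?_⟩
  exact congrArg Subtype.val (huniq ⟨z, hzx⟩ ((I.isNucleus_derived_iff hx).2 hz))

/-- In an inversive plane of even order `q`, for every circle `C` and point
`x ∉ C` there is a unique point `y ≠ x` such that every circle through `x`
and `y` is tangent to `C` (the nucleus property). -/
theorem exists_unique_nucleus_partner
    {q : ℕ} {P : Type} [Fintype P] [DecidableEq P]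
    (hq : Even q) (I : InversivePlane q P)
    (C : Finset P) (hC : C ∈ I.circles) (x : P) (hx : x ∉ C) :
    ∃! y, y ≠ x ∧ ∀ D ∈ I.circles, x ∈ D → y ∈ D → (D ∩ C).card = 1 :=
  exists_unique_nucleus_partner_general hq I hx (I.circle_card C hC) fun _ hD hxD =>
    I.card_inter_le_two hD hC (ne_of_mem_of_not_mem' hxD hx)
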